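/- Let w = x^{a_1}y^{b_1}···x^{a_r}y^{b_r} be a reduced word of complexity r ≥ 2 with A ≠ 0 or B ≠ 0, and let p be a prime with p > r. Suppose that over F_p the trace polynomial satisfies f_w(s,u,t) = D_r(q(s,u,t)) for some q ∈ F_p[s,u,t]. Then r divides both A and B, and w = (x^{A/r} y^{B/r})^r; that is, a_i = A/r and b_i = B/r for all i. -/

import Mathlib

open Matrix Polynomial

abbrev SL2 (K : Type) [CommRing K] : Type := Matrix.SpecialLinearGroup (Fin 2) K

abbrev PSL2 (K : Type) [CommRing K] : Type := SL2 K ⧸ Subgroup.center (SL2 K)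

/-- Evaluation of a word `w ∈ F₂` at a pair of group elements. -/
def wordEval {G : Type*} [Group G] (w : FreeGroup (Fin 2)) (g₁ g₂ : G) : G :=
  (FreeGroup.lift ![g₁, g₂]) w

/-- The word map `P_{w,G} : G × G → G` for `G = SL(2,K)`. -/
def wordMap (w : FreeGroup (Fin 2)) (K : Type) [CommRing K] :
    SL2 K × SL2 K → SL2 K := fun g => wordEval w g.1 g.2

/-- The point `(tr x, tr xy, tr y)`. -/
def trPoint {K : Type} [CommRing K] (x y : SL2 K) : Fin 3 → K :=
  ![Matrix.trace (x : Matrix (Fin 2) (Fin 2) K),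
    Matrix.trace ((x * y : SL2 K) : Matrix (Fin 2) (Fin 2) K),
    Matrix.trace (y : Matrix (Fin 2) (Fin 2) K)]

/-- `f ∈ ℤ[s,u,t]` is the trace polynomial of the word `w`. -/
def IsTracePolynomial (w : FreeGroup (Fin 2)) (f : MvPolynomial (Fin 3) ℤ) : Prop :=
  ∀ (K : Type) [CommRing K], ∀ x y : SL2 K,
    Matrix.trace ((wordEval w x y : SL2 K) : Matrix (Fin 2) (Fin 2) K) =
      MvPolynomial.eval (trPoint x y) (MvPolynomial.map (Int.castRingHom K) f)

/-- `f : X → Y` is `ε`-equidistributed. -/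
def IsEquidistributed {X Y : Type*} (f : X → Y) (ε : ℝ) : Prop :=
  ∃ Y' : Set Y,
    (1 - ε) * (Nat.card Y) < (Nat.card Y' : ℝ) ∧
    ∀ y ∈ Y',
      |(Nat.card {x : X // f x = y} : ℝ) - (Nat.card X : ℝ) / (Nat.card Y)| <
        ε * (Nat.card X) / (Nat.card Y)

/-- The family of word maps on `SL(2,p^n)` is `p`-equidistributed. -/
def IsPEquidistributed (w : FreeGroup (Fin 2)) (p : ℕ) (hp : p.Prime) : Prop :=
  letI : Fact p.Prime := ⟨hp⟩
  ∃ ε : ℕ → ℝ,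
    Filter.Tendsto (fun n : ℕ => ε (p ^ n)) Filter.atTop (nhds 0) ∧
    ∀ᶠ n : ℕ in Filter.atTop,
      IsEquidistributed (wordMap w (GaloisField p n)) (ε (p ^ n))

/-- The family of word maps on `SL(2,q)`, `q` ranging over all prime powers,
is equidistributed. -/
def IsEquidistributedFamily (w : FreeGroup (Fin 2)) : Prop :=
  ∃ ε : ℕ → ℝ,
    Filter.Tendsto ε Filter.atTop (nhds 0) ∧
    ∀ (p : ℕ) (hp : p.Prime),
      letI : Fact p.Prime := ⟨hp⟩
      ∀ᶠ n : ℕ in Filter.atTop,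
        IsEquidistributed (wordMap w (GaloisField p n)) (ε (p ^ n))

/-- Reduction of an integral polynomial mod `p`. -/
noncomputable def reduceMod (p : ℕ) (P : MvPolynomial (Fin 3) ℤ) : MvPolynomial (Fin 3) (ZMod p) :=
  MvPolynomial.map (Int.castRingHom (ZMod p)) P

/-- `P = h ∘ Q` with `deg Q ≥ 1`, `deg h ≥ 2`. -/
def IsCompositePoly (F : Type) [CommRing F] (P : MvPolynomial (Fin 3) F) : Prop :=
  ∃ (Q : MvPolynomial (Fin 3) F) (h : Polynomial F),
    1 ≤ Q.totalDegree ∧ 2 ≤ h.natDegree ∧ P = Polynomial.aeval Q h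

def IsPComposite (p : ℕ) (P : MvPolynomial (Fin 3) ℤ) : Prop :=
  IsCompositePoly (ZMod p) (reduceMod p P)

/-- `h` is a permutation polynomial of every finite extension of `F_p`. -/
def IsPermAllExt (p : ℕ) (h : Polynomial (ZMod p)) : Prop :=
  ∀ (K : Type) [Field K] [Algebra (ZMod p) K] [Finite K],
    Function.Bijective fun z : K => Polynomial.aeval z h

def IsPSpecial (p : ℕ) (P : MvPolynomial (Fin 3) ℤ) : Prop :=
  IsPComposite p P ∧
    ∃ (Q : MvPolynomial (Fin 3) (ZMod p)) (h : Polynomial (ZMod p)),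
      1 ≤ Q.totalDegree ∧ 2 ≤ h.natDegree ∧
      reduceMod p P = Polynomial.aeval Q h ∧ IsPermAllExt p h

def AlmostNoncomposite (P : MvPolynomial (Fin 3) ℤ) : Prop :=
  ∀ p : ℕ, p.Prime → ¬ IsPComposite p P ∨ IsPSpecial p P

/-- The reduced word `x^{a₁}y^{b₁} ⋯ x^{a_r}y^{b_r}`. -/
def wordOf {r : ℕ} (a b : Fin r → ℤ) : FreeGroup (Fin 2) :=
  (List.ofFn fun i : Fin r =>
    FreeGroup.of (0 : Fin 2) ^ a i * FreeGroup.of (1 : Fin 2) ^ b i).prod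

/-!
Let `k` be an algebraic closure of the base field and write `x`, `y` for independent indeterminates
over `k`. Evaluate `w` on the pencil `upperTorus l`, `lowerTorus d m` with `l = x ^ r`, `m = y ^ r`.
The trace is a polynomial of degree at most `r` in `d`, and its coefficient of `d ^ r` is
`∏ i, (l ^ aᵢ - l ^ (-aᵢ)) * (m ^ bᵢ - m ^ (-bᵢ))`. It equals `D_r(q)` with `D_r` monic of degree
`r`, so `q` is affine in `d` and the `r`-th power of its slope is this product. The slope is the
difference of the values of `q` at `d = 0` and `d = -1`, where the traces are those of a commuting
pair with eigenvalues `l` and `m`, respectively `l` and `m⁻¹`. There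
`D_r(q) = (x ^ A * y ^ (±B)) ^ r + (x ^ A * y ^ (±B)) ^ (-r)`, which forces
`q = ζ * x ^ A * y ^ (±B) + (ζ * x ^ A * y ^ (±B))⁻¹` for some `r`-th root of unity `ζ`. Thus
`(c₁ * x ^ A + c₂ * x ^ (-A)) ^ r = e * ∏ i, (x ^ (r * aᵢ) - x ^ (-r * aᵢ))` with `c₁`, `c₂`, `e`
free of `x` and `e ≠ 0`. Comparing the lowest terms in `x` gives `r * aᵢ = A` for all `i`, and
exchanging the roles of `x` and `y` gives `r * bᵢ = B`.
-/

section Dickson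

lemma isMonicOfDegree_dickson_succ {R : Type*} [CommRing R] [Nontrivial R] (k : ℕ) (a : R)
    (n : ℕ) : (dickson k a (n + 1)).IsMonicOfDegree (n + 1) := by
  suffices h : (dickson k a n).natDegree ≤ n ∧
      (dickson k a (n + 1)).IsMonicOfDegree (n + 1) from h.2
  induction n with
  | zero =>
    refine ⟨?_, by simpa only [zero_add, dickson_one] using isMonicOfDegree_X R⟩
    rw [dickson_zero]
    exact_mod_cast (natDegree_intCast (R := R) (3 - k)).le
  | succ n ih =>
    obtain ⟨hn, hn₁⟩ := ih
    refine ⟨hn₁.natDegree_eq.le, ?_⟩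
    rw [dickson_add_two, show n + 1 + 1 = 1 + (n + 1) by ring]
    exact ((isMonicOfDegree_X R).mul hn₁).sub ((natDegree_C_mul_le _ _).trans_lt (by lia))

variable {K : Type*} [Field K]

lemma add_inv_eq_add_inv_iff {x y : K} (hx : x ≠ 0) (hy : y ≠ 0) :
    x + x⁻¹ = y + y⁻¹ ↔ x = y ∨ x = y⁻¹ := by
  refine ⟨fun h => ?_, by rintro (rfl | rfl) <;> simp [add_comm]⟩
  have hprod : (x - y) * (x - y⁻¹) = 0 := by
    linear_combination x * h - mul_inv_cancel₀ hx + mul_inv_cancel₀ hy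
  simpa only [mul_eq_zero, sub_eq_zero] using hprod

lemma exists_add_inv_eq [IsAlgClosed K] (t : K) : ∃ y : K, y ≠ 0 ∧ y + y⁻¹ = t := by
  have hdeg : (X ^ 2 - C t * X + C 1).natDegree = 2 :=
    (isMonicOfDegree_sub_add_two t 1).natDegree_eq
  obtain ⟨y, hy⟩ := IsAlgClosed.exists_root (X ^ 2 - C t * X + C 1)
    fun h => two_ne_zero (hdeg.symm.trans (natDegree_eq_of_degree_eq_some h))
  have hroot : y ^ 2 - t * y + 1 = 0 := by
    simpa only [IsRoot, eval_add, eval_sub, eval_mul, eval_pow, eval_X, eval_C] using hy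
  have hy₀ : y ≠ 0 := by
    rintro rfl
    norm_num at hroot
  refine ⟨y, hy₀, mul_left_cancel₀ hy₀ ?_⟩
  linear_combination hroot + mul_inv_cancel₀ hy₀

lemma exists_pow_eq_of_eval_dickson_eq [IsAlgClosed K] {r : ℕ} {m t : K} (hm : m ≠ 0)
    (h : (dickson 1 (1 : K) r).eval t = m ^ r + (m ^ r)⁻¹) :
    ∃ y : K, y + y⁻¹ = t ∧ y ^ r = m ^ r := by
  obtain ⟨y, hy, rfl⟩ := exists_add_inv_eq t
  rw [dickson_one_one_eval_add_inv y y⁻¹ (mul_inv_cancel₀ hy), inv_pow,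
    add_inv_eq_add_inv_iff (pow_ne_zero r hy) (pow_ne_zero r hm)] at h
  rcases h with h | h
  · exact ⟨y, rfl, h⟩
  · exact ⟨y⁻¹, by rw [inv_inv, add_comm], by rw [inv_pow, h, inv_inv]⟩

lemma exists_eq_add_inv_of_eval_dickson_eq {r : ℕ} [NeZero r] {ζ : K} (hζ : IsPrimitiveRoot ζ r)
    {m t : K} (hm : m ≠ 0) (h : (dickson 1 (1 : K) r).eval t = m ^ r + (m ^ r)⁻¹) :
    ∃ i : ℕ, t = ζ ^ i * m + (ζ ^ i * m)⁻¹ := by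
  let φ := algebraMap K (AlgebraicClosure K)
  have hφm : φ m ≠ 0 := (map_ne_zero φ).2 hm
  have hφ : (dickson 1 1 r).eval (φ t) = φ m ^ r + (φ m ^ r)⁻¹ := by
    rw [← map_one φ, ← map_dickson, eval_map_apply, h]
    simp only [map_add, map_inv₀, map_pow]
  obtain ⟨y, hyt, hyr⟩ := exists_pow_eq_of_eval_dickson_eq hφm hφ
  obtain ⟨i, -, hi⟩ := (hζ.map_of_injective φ.injective).eq_pow_of_pow_eq_one (ξ := y / φ m)
    (by rw [div_pow, hyr, div_self (pow_ne_zero r hφm)])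
  refine ⟨i, φ.injective ?_⟩
  rw [map_add, map_inv₀, map_mul, map_pow, hi, div_mul_cancel₀ _ hφm, hyt]

end Dickson

section Composition

lemma natDegree_le_one_of_natDegree_comp_le {R : Type*} [Semiring R] [NoZeroDivisors R]
    {P Q : R[X]} (hP : P.natDegree ≠ 0) (h : (P.comp Q).natDegree ≤ P.natDegree) :
    Q.natDegree ≤ 1 := by
  rw [natDegree_comp] at h
  exact Nat.le_of_mul_le_mul_left (by rwa [mul_one]) (Nat.pos_of_ne_zero hP)

lemma coeff_comp_of_natDegree_le_one {R : Type*} [Semiring R] {P Q : R[X]} (hP : P.natDegree ≠ 0)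
    (hQ : Q.natDegree ≤ 1) :
    (P.comp Q).coeff P.natDegree = P.leadingCoeff * Q.coeff 1 ^ P.natDegree := by
  rcases hQ.lt_or_eq with hlt | heq
  · obtain ⟨c, rfl⟩ := natDegree_eq_zero.1 (Nat.lt_one_iff.1 hlt)
    simp [coeff_C, hP]
  · have hcoeff := coeff_comp_degree_mul_degree (p := P) (q := Q) (by lia)
    rwa [heq, mul_one, leadingCoeff.eq_def Q, heq] at hcoeff

end Composition

section MatrixPolynomials

variable {n R : Type*} [Fintype n] [DecidableEq n] [CommRing R]

lemma natDegree_matPolyEquiv_le {M : Matrix n n R[X]} {d : ℕ}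
    (hM : ∀ i j, (M i j).natDegree ≤ d) : (matPolyEquiv M).natDegree ≤ d := by
  refine natDegree_le_iff_coeff_eq_zero.2 fun k hk => ?_
  ext i j
  rw [matPolyEquiv_coeff_apply, coeff_eq_zero_of_natDegree_lt ((hM i j).trans_lt hk),
    Matrix.zero_apply]

lemma coeff_trace_eq_trace_coeff_matPolyEquiv (M : Matrix n n R[X]) (k : ℕ) :
    M.trace.coeff k = ((matPolyEquiv M).coeff k).trace := by
  simp only [Matrix.trace, Matrix.diag_apply, finsetSum_coeff, matPolyEquiv_coeff_apply]

lemma natDegree_trace_list_prod_le {L : List (Matrix n n R[X])} {d : ℕ}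
    (hL : ∀ M ∈ L, ∀ i j, (M i j).natDegree ≤ d) : L.prod.trace.natDegree ≤ L.length * d := by
  refine natDegree_le_iff_coeff_eq_zero.2 fun k hk => ?_
  have hdeg : (matPolyEquiv L.prod).natDegree ≤ L.length * d := by
    rw [map_list_prod]
    refine (natDegree_list_prod_le _).trans ?_
    simpa using List.sum_le_card_nsmul ((L.map matPolyEquiv).map natDegree) d
      (by simpa using fun M hM => natDegree_matPolyEquiv_le (hL M hM))
  rw [coeff_trace_eq_trace_coeff_matPolyEquiv, coeff_eq_zero_of_natDegree_lt (hdeg.trans_lt hk),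
    Matrix.trace_zero]

lemma coeff_trace_list_prod {L : List (Matrix n n R[X])} {d : ℕ}
    (hL : ∀ M ∈ L, ∀ i j, (M i j).natDegree ≤ d) :
    L.prod.trace.coeff (L.length * d) =
      (L.map fun M : Matrix n n R[X] => M.map (coeff · d)).prod.trace := by
  have hmap : (L.map fun M : Matrix n n R[X] => (matPolyEquiv M).coeff d) =
      L.map fun M : Matrix n n R[X] => M.map (coeff · d) :=
    List.map_congr_left fun M _ => by
      ext i j
      rw [matPolyEquiv_coeff_apply, Matrix.map_apply]
  have hcoeff := coeff_list_prod_of_natDegree_le (L.map matPolyEquiv) d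
    (by simpa using fun M hM => natDegree_matPolyEquiv_le (hL M hM))
  rw [List.length_map, List.map_map] at hcoeff
  rw [coeff_trace_eq_trace_coeff_matPolyEquiv, map_list_prod, hcoeff, ← hmap]
  rfl

lemma vecMulVec_mul_list_prod_vecMulVec (v u : n → R) (L : List (n → R)) :
    vecMulVec u v * (L.map (vecMulVec · v)).prod = (L.map (v ⬝ᵥ ·)).prod • vecMulVec u v := by
  induction L generalizing u with
  | nil => simp
  | cons w L ih =>
    rw [List.map_cons, List.prod_cons, ← mul_assoc, vecMulVec_mul_vecMulVec, vecMulVec_smul,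
      smul_mul_assoc, ih, smul_smul, List.map_cons, List.prod_cons]

lemma trace_list_prod_vecMulVec (v : n → R) {L : List (n → R)} (hL : L ≠ []) :
    (L.map (vecMulVec · v)).prod.trace = (L.map (v ⬝ᵥ ·)).prod := by
  obtain ⟨u, L, rfl⟩ := List.exists_cons_of_ne_nil hL
  rw [List.map_cons, List.prod_cons, vecMulVec_mul_list_prod_vecMulVec, trace_smul,
    trace_vecMulVec, List.map_cons, List.prod_cons, smul_eq_mul, mul_comm, dotProduct_comm]

end MatrixPolynomials

section WordEval

lemma map_wordEval {G H : Type*} [Group G] [Group H] (φ : G →* H) (w : FreeGroup (Fin 2))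
    (x y : G) : φ (wordEval w x y) = wordEval w (φ x) (φ y) := by
  have hlift : φ.comp (FreeGroup.lift ![x, y]) = FreeGroup.lift ![φ x, φ y] := by
    ext i
    fin_cases i <;> simp
  exact DFunLike.congr_fun hlift w

variable {r : ℕ} (a b : Fin r → ℤ)

lemma wordEval_wordOf {G : Type*} [Group G] (x y : G) :
    wordEval (wordOf a b) x y = (List.ofFn fun i => x ^ a i * y ^ b i).prod := by
  rw [wordEval, wordOf, map_list_prod, List.map_ofFn]
  congr 2
  ext i
  simp

lemma wordEval_wordOf_eq_zpow_mul_zpow {G : Type*} [CommGroup G] (x y : G) :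
    wordEval (wordOf a b) x y = x ^ (∑ i, a i) * y ^ (∑ i, b i) := by
  have hsum (g : G) (c : Fin r → ℤ) : ∏ i, g ^ c i = g ^ ∑ i, c i :=
    (Finset.sum_smul (f := c) (s := Finset.univ) (x := Additive.ofMul g)).symm
  rw [wordEval_wordOf, List.prod_ofFn, Finset.prod_mul_distrib, hsum, hsum]

end WordEval

section Tori

variable {R : Type} [CommRing R]

/-- The torus of upper triangular matrices conjugate to `diag(l, l⁻¹)` by a unipotent matrix. -/
def upperTorus : Rˣ →* SL2 R where
  toFun l := ⟨!![(l : R), l - (l⁻¹ : Rˣ); 0, (l⁻¹ : Rˣ)], by simp [det_fin_two_of]⟩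
  map_one' := by
    ext i j
    fin_cases i <;> fin_cases j <;> simp
  map_mul' l m := by
    refine Subtype.ext (.trans ?_ (Matrix.SpecialLinearGroup.coe_mul _ _).symm)
    ext i j
    fin_cases i <;> fin_cases j <;> simp <;> ring

/-- The torus of lower triangular matrices conjugate to `diag(m, m⁻¹)` by the unipotent matrix with
lower left entry `d`; the case `d = 0` is the diagonal torus. -/
def lowerTorus (d : R) : Rˣ →* SL2 R where
  toFun m := ⟨!![(m : R), 0; d * (m - (m⁻¹ : Rˣ)), (m⁻¹ : Rˣ)], by simp [det_fin_two_of]⟩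
  map_one' := by
    ext i j
    fin_cases i <;> fin_cases j <;> simp
  map_mul' l m := by
    refine Subtype.ext (.trans ?_ (Matrix.SpecialLinearGroup.coe_mul _ _).symm)
    ext i j
    fin_cases i <;> fin_cases j <;> simp <;> ring

lemma coe_upperTorus (l : Rˣ) :
    (upperTorus l : Matrix (Fin 2) (Fin 2) R) =
      !![(l : R), l - (l⁻¹ : Rˣ); 0, (l⁻¹ : Rˣ)] :=
  rfl

lemma coe_lowerTorus (d : R) (m : Rˣ) :
    (lowerTorus d m : Matrix (Fin 2) (Fin 2) R) =
      !![(m : R), 0; d * (m - (m⁻¹ : Rˣ)), (m⁻¹ : Rˣ)] :=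
  rfl

lemma coe_upperTorus_mul_lowerTorus (d : R) (l m : Rˣ) :
    ((upperTorus l * lowerTorus d m : SL2 R) : Matrix (Fin 2) (Fin 2) R) =
      !![l * m + d * ((l - (l⁻¹ : Rˣ)) * (m - (m⁻¹ : Rˣ))), (l - (l⁻¹ : Rˣ)) * (m⁻¹ : Rˣ);
        d * ((l⁻¹ : Rˣ) * (m - (m⁻¹ : Rˣ))), (l⁻¹ : Rˣ) * (m⁻¹ : Rˣ)] := by
  rw [Matrix.SpecialLinearGroup.coe_mul, coe_upperTorus, coe_lowerTorus]
  ext i j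
  fin_cases i <;> fin_cases j <;> simp <;> ring

lemma trPoint_upperTorus_lowerTorus (d : R) (l m : Rˣ) :
    trPoint (upperTorus l) (lowerTorus d m) =
      ![(l + (l⁻¹ : Rˣ) : R),
        l * m + d * ((l - (l⁻¹ : Rˣ)) * (m - (m⁻¹ : Rˣ))) + (l⁻¹ : Rˣ) * (m⁻¹ : Rˣ),
        m + (m⁻¹ : Rˣ)] := by
  rw [trPoint, coe_upperTorus_mul_lowerTorus]
  simp [coe_upperTorus, coe_lowerTorus, trace_fin_two]

lemma trPoint_lowerTorus_zero (l m : Rˣ) :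
    trPoint (lowerTorus 0 l) (lowerTorus 0 m) =
      ![(l + (l⁻¹ : Rˣ) : R), l * m + (l⁻¹ : Rˣ) * (m⁻¹ : Rˣ), m + (m⁻¹ : Rˣ)] := by
  simp [trPoint, coe_lowerTorus, trace_fin_two]

lemma trPoint_upperTorus_lowerTorus_zero (l m : Rˣ) :
    trPoint (upperTorus l) (lowerTorus 0 m) = trPoint (lowerTorus 0 l) (lowerTorus 0 m) := by
  rw [trPoint_upperTorus_lowerTorus, trPoint_lowerTorus_zero]
  simp

lemma trPoint_upperTorus_lowerTorus_neg_one (l m : Rˣ) :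
    trPoint (upperTorus l) (lowerTorus (-1) m) = trPoint (lowerTorus 0 l) (lowerTorus 0 m⁻¹) := by
  rw [trPoint_upperTorus_lowerTorus, trPoint_lowerTorus_zero, inv_inv, add_comm (m : R)]
  congr 2
  ring

lemma trace_wordEval_lowerTorus {r : ℕ} (a b : Fin r → ℤ) (d : R) (l m : Rˣ) :
    ((wordEval (wordOf a b) (lowerTorus d l) (lowerTorus d m) : SL2 R) :
      Matrix (Fin 2) (Fin 2) R).trace =
      ((l ^ (∑ i, a i) * m ^ (∑ i, b i) : Rˣ) : R) +
        ((l ^ (∑ i, a i) * m ^ (∑ i, b i))⁻¹ : Rˣ) := by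
  rw [← map_wordEval, wordEval_wordOf_eq_zpow_mul_zpow]
  simp only [coe_lowerTorus, trace_fin_two_of]

end Tori

section Pencil

/-- A unit of `R` as a constant unit of `R[X]`, so that `upperTorus (constUnit l)` and
`lowerTorus X (constUnit m)` are the generic pencil specializing at `X = d` to `upperTorus l` and
`lowerTorus d m`. -/
noncomputable def constUnit {R : Type*} [CommRing R] : Rˣ →* R[X]ˣ :=
  Units.map (C : R →+* R[X]).toMonoidHom

variable {R : Type} [CommRing R]

lemma coe_upperTorus_constUnit_mul_lowerTorus_X (l m : Rˣ) :
    ((upperTorus (constUnit l) * lowerTorus X (constUnit m) : SL2 R[X]) :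
      Matrix (Fin 2) (Fin 2) R[X]) =
      !![C (l * m : R) + X * C ((l - (l⁻¹ : Rˣ)) * (m - (m⁻¹ : Rˣ)) : R),
        C ((l - (l⁻¹ : Rˣ)) * (m⁻¹ : Rˣ) : R);
        X * C ((l⁻¹ : Rˣ) * (m - (m⁻¹ : Rˣ)) : R), C ((l⁻¹ : Rˣ) * (m⁻¹ : Rˣ) : R)] := by
  rw [coe_upperTorus_mul_lowerTorus]
  simp [constUnit]

lemma natDegree_upperTorus_constUnit_mul_lowerTorus_X_le (l m : Rˣ) (i j : Fin 2) :
    (((upperTorus (constUnit l) * lowerTorus X (constUnit m) : SL2 R[X]) :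
      Matrix (Fin 2) (Fin 2) R[X]) i j).natDegree ≤ 1 := by
  rw [coe_upperTorus_constUnit_mul_lowerTorus_X]
  fin_cases i <;> fin_cases j <;> dsimp <;> compute_degree!

-- The matrices of leading coefficients have rank one with a common row vector, so the trace of
-- their product factors.
lemma map_coeff_one_upperTorus_constUnit_mul_lowerTorus_X (l m : Rˣ) :
    ((upperTorus (constUnit l) * lowerTorus X (constUnit m) : SL2 R[X]) :
      Matrix (Fin 2) (Fin 2) R[X]).map (coeff · 1) =
      vecMulVec ![((l - (l⁻¹ : Rˣ)) * (m - (m⁻¹ : Rˣ)) : R), (l⁻¹ : Rˣ) * (m - (m⁻¹ : Rˣ))]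
        ![1, 0] := by
  rw [coe_upperTorus_constUnit_mul_lowerTorus_X]
  ext i j
  fin_cases i <;> fin_cases j <;> simp [coeff_C]

variable {r : ℕ} (a b : Fin r → ℤ) (l m : Rˣ)

lemma coe_wordEval_pencil :
    ((wordEval (wordOf a b) (upperTorus (constUnit l)) (lowerTorus X (constUnit m)) : SL2 R[X]) :
      Matrix (Fin 2) (Fin 2) R[X]) =
      (List.ofFn fun i => ((upperTorus (constUnit (l ^ a i)) *
        lowerTorus X (constUnit (m ^ b i)) : SL2 R[X]) : Matrix (Fin 2) (Fin 2) R[X])).prod := by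
  rw [wordEval_wordOf, ← Matrix.SpecialLinearGroup.coeMonoidHom_apply, map_list_prod, List.map_ofFn]
  simp only [map_zpow]
  rfl

lemma natDegree_trace_wordEval_pencil_le :
    ((wordEval (wordOf a b) (upperTorus (constUnit l)) (lowerTorus X (constUnit m)) : SL2 R[X]) :
      Matrix (Fin 2) (Fin 2) R[X]).trace.natDegree ≤ r := by
  rw [coe_wordEval_pencil]
  refine (natDegree_trace_list_prod_le (d := 1) ?_).trans_eq (by simp)
  simpa only [List.forall_mem_ofFn_iff] using
    fun i => natDegree_upperTorus_constUnit_mul_lowerTorus_X_le _ _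

lemma coeff_trace_wordEval_pencil [NeZero r] :
    ((wordEval (wordOf a b) (upperTorus (constUnit l)) (lowerTorus X (constUnit m)) : SL2 R[X]) :
      Matrix (Fin 2) (Fin 2) R[X]).trace.coeff r =
      ∏ i, (((l ^ a i : Rˣ) - ((l ^ a i)⁻¹ : Rˣ)) * ((m ^ b i : Rˣ) - ((m ^ b i)⁻¹ : Rˣ)) : R) := by
  rw [coe_wordEval_pencil]
  have hcoeff := coeff_trace_list_prod (d := 1) (L := List.ofFn fun i =>
    ((upperTorus (constUnit (l ^ a i)) * lowerTorus X (constUnit (m ^ b i)) : SL2 R[X]) :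
      Matrix (Fin 2) (Fin 2) R[X])) (by
    simpa only [List.forall_mem_ofFn_iff] using
      fun i => natDegree_upperTorus_constUnit_mul_lowerTorus_X_le _ _)
  rw [List.length_ofFn, mul_one, List.map_ofFn] at hcoeff
  rw [hcoeff]
  simp only [Function.comp_def, map_coeff_one_upperTorus_constUnit_mul_lowerTorus_X]
  have hrank := trace_list_prod_vecMulVec ![(1 : R), 0] (L := List.ofFn fun i =>
    ![(((l ^ a i : Rˣ) - ((l ^ a i)⁻¹ : Rˣ)) * ((m ^ b i : Rˣ) - ((m ^ b i)⁻¹ : Rˣ)) : R),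
      ((l ^ a i)⁻¹ : Rˣ) * ((m ^ b i : Rˣ) - ((m ^ b i)⁻¹ : Rˣ))]) (by simp [NeZero.ne r])
  rw [List.map_ofFn, List.map_ofFn, List.prod_ofFn] at hrank
  simpa [Function.comp_def] using hrank

end Pencil

section Decomposition

variable {F : Type} [Field F] {r : ℕ} {a b : Fin r → ℤ} {f : MvPolynomial (Fin 3) ℤ}
  {q : MvPolynomial (Fin 3) F} {P : F[X]}

lemma trace_wordEval_eq_aeval {w : FreeGroup (Fin 2)} (hf : IsTracePolynomial w f)
    (hdec : MvPolynomial.map (Int.castRingHom F) f = aeval q P)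
    {R : Type} [CommRing R] [Algebra F R] (x y : SL2 R) :
    ((wordEval w x y : SL2 R) : Matrix (Fin 2) (Fin 2) R).trace =
      aeval (MvPolynomial.aeval (trPoint x y) q) P := by
  have hcast : Int.castRingHom R = (algebraMap F R).comp (Int.castRingHom F) :=
    RingHom.ext_int _ _
  rw [hf R x y, hcast, ← MvPolynomial.map_map, hdec, MvPolynomial.eval_map,
    ← MvPolynomial.aeval_def]
  exact (aeval_algHom_apply (MvPolynomial.aeval (trPoint x y)) q P).symm

variable {K : Type} [Field K] [Algebra F K]

lemma eval_aeval_trPoint_pencil (q : MvPolynomial (Fin 3) F) (l m : Kˣ) (d : K) :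
    (MvPolynomial.aeval (trPoint (upperTorus (constUnit l)) (lowerTorus X (constUnit m))) q).eval
      d = MvPolynomial.aeval (trPoint (upperTorus l) (lowerTorus d m)) q := by
  have hpoint : (fun i => (trPoint (upperTorus (constUnit l)) (lowerTorus X (constUnit m)) i).eval
      d) = trPoint (upperTorus l) (lowerTorus d m) := by
    ext i
    rw [trPoint_upperTorus_lowerTorus, trPoint_upperTorus_lowerTorus]
    fin_cases i <;> simp [constUnit]
  rw [← hpoint]
  exact MvPolynomial.comp_aeval_apply _ ((Polynomial.aeval d).restrictScalars F) q

lemma aeval_trPoint_sub_pow_eq_prod [NeZero r] (hf : IsTracePolynomial (wordOf a b) f)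
    (hP : P.IsMonicOfDegree r) (hdec : MvPolynomial.map (Int.castRingHom F) f = aeval q P)
    (l m : Kˣ) :
    (MvPolynomial.aeval (trPoint (lowerTorus 0 l) (lowerTorus 0 m)) q -
      MvPolynomial.aeval (trPoint (lowerTorus 0 l) (lowerTorus 0 m⁻¹)) q) ^ r =
      ∏ i, (((l ^ a i : Kˣ) - ((l ^ a i)⁻¹ : Kˣ)) * ((m ^ b i : Kˣ) - ((m ^ b i)⁻¹ : Kˣ)) : K) := by
  set Q : K[X] :=
    MvPolynomial.aeval (trPoint (upperTorus (constUnit l)) (lowerTorus X (constUnit m))) q with hQ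
  have hdeg : (P.map (algebraMap F K)).natDegree = r := by rw [natDegree_map, hP.natDegree_eq]
  have hcomp : (P.map (algebraMap F K)).comp Q = ((wordEval (wordOf a b) (upperTorus (constUnit l))
      (lowerTorus X (constUnit m)) : SL2 K[X]) : Matrix (Fin 2) (Fin 2) K[X]).trace := by
    rw [trace_wordEval_eq_aeval hf hdec]
    exact eval₂_map _ _ _
  have hQdeg : Q.natDegree ≤ 1 :=
    natDegree_le_one_of_natDegree_comp_le (P := P.map (algebraMap F K))
      (by rw [hdeg]; exact NeZero.ne r)
      (by rw [hcomp, hdeg]; exact natDegree_trace_wordEval_pencil_le a b l m)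
  have hslope : Q.coeff 1 = Q.eval 0 - Q.eval (-1) := by
    rw [eq_X_add_C_of_natDegree_le_one hQdeg]
    simp
  have hcoeff := coeff_comp_of_natDegree_le_one (P := P.map (algebraMap F K))
    (by rw [hdeg]; exact NeZero.ne r) hQdeg
  rw [hdeg, hcomp, coeff_trace_wordEval_pencil, (hP.monic.map _).leadingCoeff, one_mul, hslope, hQ,
    eval_aeval_trPoint_pencil, eval_aeval_trPoint_pencil, trPoint_upperTorus_lowerTorus_zero,
    trPoint_upperTorus_lowerTorus_neg_one] at hcoeff
  exact hcoeff.symm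

end Decomposition

section OneSubXPow

variable {ι R : Type*} [CommRing R]

lemma coeff_zero_prod_one_sub_X_pow (s : Finset ι) {e : ι → ℕ} (he : ∀ i ∈ s, e i ≠ 0) :
    (∏ i ∈ s, (1 - X ^ e i) : R[X]).coeff 0 = 1 := by
  rw [coeff_zero_prod]
  exact Finset.prod_eq_one fun i hi => by simp [coeff_X_pow, (he i hi).symm]

lemma coeff_prod_one_sub_X_pow (s : Finset ι) {e : ι → ℕ} {n : ℕ} (hn : n ≠ 0)
    (he : ∀ i ∈ s, n ≤ e i) :
    (∏ i ∈ s, (1 - X ^ e i) : R[X]).coeff n = -((s.filter (e · = n)).card : R) := by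
  classical
  induction s using Finset.induction_on with
  | empty => simp [coeff_one, hn]
  | insert j s hj ih =>
    have hs : ∀ i ∈ s, n ≤ e i := fun i hi => he i (Finset.mem_insert_of_mem hi)
    have hconst := coeff_zero_prod_one_sub_X_pow (R := R) s (e := e) fun i hi => by
      have := hs i hi; lia
    have hnj : n ≤ e j := he j (Finset.mem_insert_self j s)
    rw [Finset.prod_insert hj, sub_mul, one_mul, coeff_sub, ih hs, coeff_X_pow_mul',
      Finset.filter_insert]
    by_cases hjn : e j = n
    · have hjs : j ∉ s.filter (e · = n) := fun h => hj (Finset.mem_of_mem_filter j h)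
      rw [if_pos hjn.le, if_pos hjn, hjn, Nat.sub_self, hconst, Finset.card_insert_of_notMem hjs]
      push_cast
      ring
    · rw [if_neg (by lia), if_neg hjn, sub_zero]

lemma dvd_of_coeff_expand_ne_zero {M n : ℕ} {P : R[X]} (h : (expand R M P).coeff n ≠ 0) :
    M ∣ n := by
  rcases M.eq_zero_or_pos with rfl | hM
  · rw [expand_zero, coeff_C] at h
    exact zero_dvd_iff.2 (by_contra fun hn => h (if_neg hn))
  · rw [coeff_expand hM] at h
    exact by_contra fun hn => h (if_neg hn)

variable [NoZeroDivisors R] [Fintype ι]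

-- The right side has the nonzero term of degree `min e`, whose coefficient counts the minimal `eᵢ`;
-- on the left, where `s = 0`, all degrees are multiples of `M`.
lemma exponents_of_X_pow_mul_pow_eq_prod (hι : ((Fintype.card ι).factorial : R) ≠ 0) {e : ι → ℕ}
    (he : ∀ i, e i ≠ 0) {s M : ℕ} {d₁ d₂ c : R} (hc : c ≠ 0)
    (h : X ^ s * (C d₁ * X ^ M + C d₂) ^ Fintype.card ι = C c * ∏ i, (1 - X ^ e i)) :
    s = 0 ∧ ∀ i, M ≤ e i := by
  have hs : s = 0 := by
    by_contra hs
    have hconst := congr_arg (coeff · 0) h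
    simp [mul_coeff_zero, coeff_zero_prod_one_sub_X_pow _ fun i _ => he i, Ne.symm hs,
      hc.symm] at hconst
  refine ⟨hs, fun i => ?_⟩
  obtain ⟨j, -, hj⟩ := Finset.exists_min_image Finset.univ e ⟨i, Finset.mem_univ i⟩
  set count := (Finset.univ.filter (e · = e j)).card with hcount
  have hcount_ne : (count : R) ≠ 0 := by
    have hpos : 0 < count := Finset.card_pos.2 ⟨j, by simp⟩
    obtain ⟨t, ht⟩ := Nat.dvd_factorial hpos (Finset.card_filter_le _ _)
    rw [← Finset.card_univ, ht, Nat.cast_mul] at hι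
    exact left_ne_zero_of_mul hι
  have hexpand : expand R M ((C d₁ * X + C d₂) ^ Fintype.card ι) = C c * ∏ i, (1 - X ^ e i) := by
    rw [← h, hs]
    simp
  have hcoeff : (expand R M ((C d₁ * X + C d₂) ^ Fintype.card ι)).coeff (e j) ≠ 0 := by
    rw [hexpand, coeff_C_mul, coeff_prod_one_sub_X_pow _ (he j) hj]
    exact mul_ne_zero hc (neg_ne_zero.2 hcount_ne)
  exact (Nat.le_of_dvd (Nat.pos_of_ne_zero (he j)) (dvd_of_coeff_expand_ne_zero hcoeff)).trans
    (hj i (Finset.mem_univ i))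

end OneSubXPow

section Laurent

-- The two inequalities force `|cᵢ| = |A|`, hence `∑ i, (cᵢ - A) ^ 2 = ∑ i, 2 * A * (A - cᵢ) = 0`.
lemma eq_of_sum_eq_card_mul {ι : Type*} [Fintype ι] {c : ι → ℤ} {A : ℤ}
    (hsum : ∑ i, c i = Fintype.card ι * A) (habs : ∑ i, |c i| ≤ Fintype.card ι * |A|)
    (hle : ∀ i, |A| ≤ |c i|) (i : ι) : c i = A := by
  have hcard (z : ℤ) : ∑ _i : ι, z = Fintype.card ι * z := by simp
  have hsq (j : ι) : c j ^ 2 = A ^ 2 := by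
    have heq := (Finset.sum_eq_sum_iff_of_le fun j _ => hle j).1
      (((Finset.sum_le_sum fun j _ => hle j)).antisymm (by rwa [hcard]))
    exact (sq_eq_sq_iff_abs_eq_abs _ _).2 (heq j (Finset.mem_univ j)).symm
  have hzero : ∑ j, (c j - A) ^ 2 = 0 :=
    calc ∑ j, (c j - A) ^ 2 = ∑ j, (2 * A ^ 2 - 2 * A * c j) :=
          Finset.sum_congr rfl fun j _ => by linear_combination hsq j
      _ = 0 := by
          rw [Finset.sum_sub_distrib, ← Finset.mul_sum Finset.univ c, hsum, hcard]
          ring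
  have hi := (Finset.sum_eq_zero_iff_of_nonneg fun j _ => sq_nonneg (c j - A)).1 hzero i
    (Finset.mem_univ i)
  exact sub_eq_zero.1 (pow_eq_zero_iff two_ne_zero |>.1 hi)

lemma neg_intCast_sign_ne_zero {R : Type*} [Ring R] [Nontrivial R] {n : ℤ} (hn : n ≠ 0) :
    -(n.sign : R) ≠ 0 := by
  rcases hn.lt_or_gt with hn | hn
  · simp [Int.sign_eq_neg_one_of_neg hn]
  · simp [Int.sign_eq_one_of_pos hn]

lemma pow_natAbs_mul_zpow_sub_inv {K : Type*} [Field K] {z : K} (hz : z ≠ 0) (n : ℤ) :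
    z ^ n.natAbs * (z ^ n - (z ^ n)⁻¹) = -(n.sign : K) * (1 - z ^ (2 * n.natAbs)) := by
  rcases lt_trichotomy n 0 with hn | rfl | hn
  · obtain ⟨m, rfl⟩ : ∃ m : ℕ, n = -m := ⟨n.natAbs, by lia⟩
    rw [Int.sign_eq_neg_one_of_neg hn, Int.natAbs_neg, Int.natAbs_natCast, _root_.zpow_neg,
      zpow_natCast, inv_inv, mul_sub, mul_inv_cancel₀ (pow_ne_zero m hz)]
    push_cast
    ring
  · simp
  · obtain ⟨m, rfl⟩ : ∃ m : ℕ, n = m := ⟨n.natAbs, by lia⟩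
    rw [Int.sign_eq_one_of_pos hn, Int.natAbs_natCast, zpow_natCast, mul_sub,
      mul_inv_cancel₀ (pow_ne_zero m hz)]
    push_cast
    ring

variable {k : Type*} [Field k]

lemma exists_X_pow_natAbs_mul_eq (A : ℤ) (c₁ c₂ : k) : ∃ d₁ d₂ : k,
    (RatFunc.X : RatFunc k) ^ A.natAbs *
      (RatFunc.C c₁ * RatFunc.X ^ A + RatFunc.C c₂ * (RatFunc.X ^ A)⁻¹) =
      RatFunc.C d₁ * RatFunc.X ^ (2 * A.natAbs) + RatFunc.C d₂ := by
  obtain ⟨n, rfl | rfl⟩ := A.eq_nat_or_neg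
  · refine ⟨c₁, c₂, ?_⟩
    rw [Int.natAbs_natCast, zpow_natCast]
    linear_combination RatFunc.C c₂ * mul_inv_cancel₀ (pow_ne_zero n (RatFunc.X_ne_zero (K := k)))
  · refine ⟨c₂, c₁, ?_⟩
    rw [Int.natAbs_neg, Int.natAbs_natCast, _root_.zpow_neg, zpow_natCast, inv_inv]
    linear_combination RatFunc.C c₁ * mul_inv_cancel₀ (pow_ne_zero n (RatFunc.X_ne_zero (K := k)))

lemma X_zpow_sub_inv_ne_zero {n : ℤ} (hn : n ≠ 0) :
    (RatFunc.X : RatFunc k) ^ n - (RatFunc.X ^ n)⁻¹ ≠ 0 := by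
  have hX : (1 - RatFunc.X ^ (2 * n.natAbs) : RatFunc k) ≠ 0 := by
    rw [← RatFunc.algebraMap_X, ← map_pow, ← map_one (algebraMap k[X] (RatFunc k)), ← map_sub,
      Ne, map_eq_zero_iff _ (RatFunc.algebraMap_injective k), ← neg_eq_zero, neg_sub]
    exact X_pow_sub_C_ne_zero (by lia) 1
  refine right_ne_zero_of_mul (a := RatFunc.X ^ n.natAbs) ?_
  rw [pow_natAbs_mul_zpow_sub_inv RatFunc.X_ne_zero]
  exact mul_ne_zero (neg_intCast_sign_ne_zero hn) hX

lemma eq_of_pow_eq_prod_zpow_sub_inv {ι : Type*} [Fintype ι]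
    (hι : ((Fintype.card ι).factorial : k) ≠ 0) {c : ι → ℤ} (hc : ∀ i, c i ≠ 0) {A : ℤ}
    (hsum : ∑ i, c i = Fintype.card ι * A) {c₁ c₂ e : k} (he : e ≠ 0)
    (h : (RatFunc.C c₁ * RatFunc.X ^ A + RatFunc.C c₂ * (RatFunc.X ^ A)⁻¹) ^ Fintype.card ι =
      RatFunc.C e * ∏ i, (RatFunc.X ^ c i - (RatFunc.X ^ c i)⁻¹)) (i : ι) : c i = A := by
  obtain ⟨d₁, d₂, hd⟩ := exists_X_pow_natAbs_mul_eq A c₁ c₂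
  obtain ⟨s, hs⟩ : ∃ s, ∑ i, (c i).natAbs = s + Fintype.card ι * A.natAbs := by
    refine Nat.exists_eq_add_of_le' ?_
    zify
    calc (Fintype.card ι : ℤ) * |A| = |∑ i, c i| := by rw [hsum, abs_mul, Nat.abs_cast]
      _ ≤ ∑ i, |c i| := Finset.abs_sum_le_sum_abs _ _
  have hpoly : X ^ s * (C d₁ * X ^ (2 * A.natAbs) + C d₂) ^ Fintype.card ι =
      C (e * ∏ i, -((c i).sign : k)) * ∏ i, (1 - X ^ (2 * (c i).natAbs)) := by
    refine RatFunc.algebraMap_injective k ?_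
    simp only [map_mul, map_pow, map_add, map_prod, map_sub, map_one, map_neg, map_intCast,
      RatFunc.algebraMap_X, RatFunc.algebraMap_C]
    calc RatFunc.X ^ s * (RatFunc.C d₁ * RatFunc.X ^ (2 * A.natAbs) + RatFunc.C d₂) ^ Fintype.card ι
      _ = RatFunc.X ^ (∑ i, (c i).natAbs) *
          (RatFunc.C c₁ * RatFunc.X ^ A + RatFunc.C c₂ * (RatFunc.X ^ A)⁻¹) ^ Fintype.card ι := by
        rw [← hd, hs, mul_pow]
        ring
      _ = RatFunc.C e * ∏ i, (RatFunc.X ^ (c i).natAbs *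
          (RatFunc.X ^ c i - (RatFunc.X ^ c i)⁻¹)) := by
        rw [h, Finset.prod_mul_distrib, Finset.prod_pow_eq_pow_sum]
        ring
      _ = _ := by
        simp only [pow_natAbs_mul_zpow_sub_inv (RatFunc.X_ne_zero (K := k)),
          Finset.prod_mul_distrib, mul_assoc]
  have hlead : e * ∏ i, -((c i).sign : k) ≠ 0 :=
    mul_ne_zero he (Finset.prod_ne_zero_iff.2 fun i _ => neg_intCast_sign_ne_zero (hc i))
  obtain ⟨rfl, hle⟩ := exponents_of_X_pow_mul_pow_eq_prod hι
    (fun i => mul_ne_zero two_ne_zero (Int.natAbs_ne_zero.2 (hc i))) hlead hpoly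
  refine eq_of_sum_eq_card_mul hsum ?_ (fun j => ?_) i
  · zify at hs
    rw [hs, zero_add]
  · have := hle j
    zify at this
    lia

end Laurent

section DicksonDecomposition

variable {F : Type} [Field F] {r : ℕ} [NeZero r] {a b : Fin r → ℤ} {f : MvPolynomial (Fin 3) ℤ}
  {q : MvPolynomial (Fin 3) F}

lemma exists_aeval_trPoint_eq_add_inv {K : Type} [Field K] [Algebra F K] {ζ : K}
    (hζ : IsPrimitiveRoot ζ r) (hf : IsTracePolynomial (wordOf a b) f)
    (hdec : MvPolynomial.map (Int.castRingHom F) f = aeval q (dickson 1 (1 : F) r)) (x y : Kˣ) :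
    ∃ n : ℕ, MvPolynomial.aeval (trPoint (lowerTorus 0 (x ^ r)) (lowerTorus 0 (y ^ r))) q =
      ζ ^ n * (x ^ (∑ i, a i) * y ^ (∑ i, b i)) +
        (ζ ^ n * (x ^ (∑ i, a i) * y ^ (∑ i, b i)) : K)⁻¹ := by
  have htrace := trace_wordEval_eq_aeval hf hdec (lowerTorus 0 (x ^ r)) (lowerTorus (0 : K) (y ^ r))
  have hpow : (x ^ r) ^ (∑ i, a i) * (y ^ r) ^ (∑ i, b i) =
      (x ^ (∑ i, a i) * y ^ (∑ i, b i)) ^ r := by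
    rw [mul_pow, ← zpow_natCast, ← zpow_natCast y, ← zpow_natCast (x ^ _), ← zpow_natCast (y ^ _),
      zpow_comm, zpow_comm y]
  rw [trace_wordEval_lowerTorus, hpow, aeval_def, eval₂_eq_eval_map, map_dickson, map_one] at htrace
  refine exists_eq_add_inv_of_eval_dickson_eq hζ
    (mul_ne_zero (zpow_ne_zero _ x.ne_zero) (zpow_ne_zero _ y.ne_zero)) ?_
  rw [← htrace]
  push_cast
  rfl

lemma exists_sub_pow_eq_prod_mul_prod {K : Type} [Field K] [Algebra F K] {ζ : K}
    (hζ : IsPrimitiveRoot ζ r) (hf : IsTracePolynomial (wordOf a b) f)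
    (hdec : MvPolynomial.map (Int.castRingHom F) f = aeval q (dickson 1 (1 : F) r)) {x y : K}
    (hx : x ≠ 0) (hy : y ≠ 0) :
    ∃ m n : ℕ, (ζ ^ m * (x ^ (∑ i, a i) * y ^ (∑ i, b i)) +
          (ζ ^ m * (x ^ (∑ i, a i) * y ^ (∑ i, b i)))⁻¹ -
        (ζ ^ n * (x ^ (∑ i, a i) * (y ^ (∑ i, b i))⁻¹) +
          (ζ ^ n * (x ^ (∑ i, a i) * (y ^ (∑ i, b i))⁻¹))⁻¹)) ^ r =
      (∏ i, (x ^ (r * a i) - (x ^ (r * a i))⁻¹)) * ∏ i, (y ^ (r * b i) - (y ^ (r * b i))⁻¹) := by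
  lift x to Kˣ using hx.isUnit
  lift y to Kˣ using hy.isUnit
  obtain ⟨m, hm⟩ := exists_aeval_trPoint_eq_add_inv hζ hf hdec x y
  obtain ⟨n, hn⟩ := exists_aeval_trPoint_eq_add_inv hζ hf hdec x y⁻¹
  refine ⟨m, n, ?_⟩
  have hmonic : (dickson 1 (1 : F) r).IsMonicOfDegree r := by
    simpa only [Nat.sub_add_cancel (NeZero.one_le (n := r))] using
      isMonicOfDegree_dickson_succ 1 (1 : F) (r - 1)
  have hprod := aeval_trPoint_sub_pow_eq_prod hf hmonic hdec (x ^ r) (y ^ r)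
  rw [← inv_pow, hm, hn, Finset.prod_mul_distrib] at hprod
  simpa [_root_.zpow_mul] using hprod

variable {k : Type} [Field k] [Algebra F k] {ζ : k}

lemma mul_x_exponent_eq_sum (hr : (r.factorial : k) ≠ 0)
    (hζ : IsPrimitiveRoot ζ r) (hf : IsTracePolynomial (wordOf a b) f)
    (hdec : MvPolynomial.map (Int.castRingHom F) f = aeval q (dickson 1 (1 : F) r))
    (ha : ∀ i, a i ≠ 0) {y : k} (hy₀ : y ≠ 0)
    (hy : ∀ i, y ^ (r * b i) - (y ^ (r * b i))⁻¹ ≠ 0) (i : Fin r) : r * a i = ∑ j, a j := by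
  obtain ⟨m, n, h⟩ := exists_sub_pow_eq_prod_mul_prod
    (hζ.map_of_injective (RatFunc.C (K := k)).injective) hf hdec RatFunc.X_ne_zero
    ((map_ne_zero (RatFunc.C (K := k))).2 hy₀)
  set z := y ^ ∑ j, b j
  refine eq_of_pow_eq_prod_zpow_sub_inv (k := k) (c := fun j => r * a j)
    (c₁ := ζ ^ m * z - ζ ^ n * z⁻¹) (c₂ := (ζ ^ m * z)⁻¹ - (ζ ^ n * z⁻¹)⁻¹)
    (e := ∏ j, (y ^ (r * b j) - (y ^ (r * b j))⁻¹)) ?_ ?_ ?_ ?_ ?_ i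
  · rwa [Fintype.card_fin]
  · exact fun j => mul_ne_zero (by exact_mod_cast NeZero.ne r) (ha j)
  · rw [Fintype.card_fin, Finset.mul_sum]
  · exact Finset.prod_ne_zero_iff.2 fun j _ => hy j
  · rw [Fintype.card_fin]
    simp only [map_sub, map_mul, map_pow, map_inv₀, map_zpow₀, map_prod, z] at h ⊢
    rw [mul_comm (∏ j, _), ← h]
    congr 1
    simp only [mul_inv, inv_inv]
    ring

lemma mul_y_exponent_eq_sum (hr : (r.factorial : k) ≠ 0)
    (hζ : IsPrimitiveRoot ζ r) (hf : IsTracePolynomial (wordOf a b) f)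
    (hdec : MvPolynomial.map (Int.castRingHom F) f = aeval q (dickson 1 (1 : F) r))
    (hb : ∀ i, b i ≠ 0) {x : k} (hx₀ : x ≠ 0)
    (hx : ∀ i, x ^ (r * a i) - (x ^ (r * a i))⁻¹ ≠ 0) (i : Fin r) : r * b i = ∑ j, b j := by
  obtain ⟨m, n, h⟩ := exists_sub_pow_eq_prod_mul_prod
    (hζ.map_of_injective (RatFunc.C (K := k)).injective) hf hdec
    ((map_ne_zero (RatFunc.C (K := k))).2 hx₀) RatFunc.X_ne_zero
  set z := x ^ ∑ j, a j
  refine eq_of_pow_eq_prod_zpow_sub_inv (k := k) (c := fun j => r * b j)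
    (c₁ := ζ ^ m * z - (ζ ^ n * z)⁻¹) (c₂ := (ζ ^ m * z)⁻¹ - ζ ^ n * z)
    (e := ∏ j, (x ^ (r * a j) - (x ^ (r * a j))⁻¹)) ?_ ?_ ?_ ?_ ?_ i
  · rwa [Fintype.card_fin]
  · exact fun j => mul_ne_zero (by exact_mod_cast NeZero.ne r) (hb j)
  · rw [Fintype.card_fin, Finset.mul_sum]
  · exact Finset.prod_ne_zero_iff.2 fun j _ => hx j
  · rw [Fintype.card_fin]
    simp only [map_sub, map_mul, map_pow, map_inv₀, map_zpow₀, map_prod, z] at h ⊢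
    rw [← h]
    congr 1
    simp only [mul_inv, inv_inv]
    ring

end DicksonDecomposition

theorem word_eq_power_of_dickson_decomposition_modp_general {F : Type} [Field F] {r : ℕ}
    (hr : (r.factorial : F) ≠ 0) (a b : Fin r → ℤ) (hab : ∀ i, a i ≠ 0 ∧ b i ≠ 0)
    (A B : ℤ) (hA : A = ∑ i, a i) (hB : B = ∑ i, b i)
    (f : MvPolynomial (Fin 3) ℤ) (hf : IsTracePolynomial (wordOf a b) f)
    (q : MvPolynomial (Fin 3) F)
    (hdec : MvPolynomial.map (Int.castRingHom F) f =
      Polynomial.aeval q (Polynomial.dickson 1 (1 : F) r)) :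
    (r : ℤ) ∣ A ∧ (r : ℤ) ∣ B ∧ ∀ i, a i = A / r ∧ b i = B / r := by
  rcases r.eq_zero_or_pos with rfl | hpos
  · simp [hA, hB]
  have : NeZero r := ⟨hpos.ne'⟩
  have hr₀ : (r : ℤ) ≠ 0 := by exact_mod_cast hpos.ne'
  have : NeZero (r : AlgebraicClosure F) := by
    refine ⟨fun h => hr ?_⟩
    rw [← map_natCast (algebraMap F _), map_eq_zero] at h
    exact zero_dvd_iff.1 (h ▸ Nat.cast_dvd_cast (Nat.dvd_factorial hpos le_rfl))
  obtain ⟨ζ, hζ⟩ := HasEnoughRootsOfUnity.exists_primitiveRoot (AlgebraicClosure F) r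
  have hζX := hζ.map_of_injective (RatFunc.C (K := AlgebraicClosure F)).injective
  have hrX : (r.factorial : RatFunc (AlgebraicClosure F)) ≠ 0 := by
    rwa [← map_natCast (algebraMap F _), _root_.map_ne_zero]
  have ha := mul_x_exponent_eq_sum hrX hζX hf hdec (fun i => (hab i).1) RatFunc.X_ne_zero
    fun i => X_zpow_sub_inv_ne_zero (mul_ne_zero hr₀ (hab i).2)
  have hb := mul_y_exponent_eq_sum hrX hζX hf hdec (fun i => (hab i).2) RatFunc.X_ne_zero
    fun i => X_zpow_sub_inv_ne_zero (mul_ne_zero hr₀ (hab i).1)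
  rw [← hA] at ha
  rw [← hB] at hb
  refine ⟨⟨_, (ha ⟨0, hpos⟩).symm⟩, ⟨_, (hb ⟨0, hpos⟩).symm⟩, fun i => ⟨?_, ?_⟩⟩
  · rw [← ha i, Int.mul_ediv_cancel_left _ hr₀]
  · rw [← hb i, Int.mul_ediv_cancel_left _ hr₀]

theorem word_eq_power_of_dickson_decomposition_modp {r : ℕ} (hr : 2 ≤ r)
    (a b : Fin r → ℤ) (hab : ∀ i, a i ≠ 0 ∧ b i ≠ 0)
    (A B : ℤ) (hA : A = ∑ i, a i) (hB : B = ∑ i, b i) (hAB : A ≠ 0 ∨ B ≠ 0)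
    (p : ℕ) (hp : p.Prime) (hpr : r < p)
    (f : MvPolynomial (Fin 3) ℤ) (hf : IsTracePolynomial (wordOf a b) f)
    (q : MvPolynomial (Fin 3) (ZMod p))
    (hdec : MvPolynomial.map (Int.castRingHom (ZMod p)) f =
      Polynomial.aeval q (Polynomial.dickson 1 (1 : ZMod p) r)) :
    (r : ℤ) ∣ A ∧ (r : ℤ) ∣ B ∧ ∀ i, a i = A / r ∧ b i = B / r := by
  have : Fact p.Prime := ⟨hp⟩
  have hfactorial : (r.factorial : ZMod p) ≠ 0 := by
    rwa [Ne, ZMod.natCast_eq_zero_iff, hp.dvd_factorial, not_le]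
  exact word_eq_power_of_dickson_decomposition_modp_general hfactorial a b hab A B hA hB f hf q hdec
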